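/- (Theorem 2, property 1, for f̂) Conditional on the acceptance event E⁻₁ ∪ E⁺, the accepted observation is distributed according to the density f̂: for every x ∈ ℝ, P(X ≤ x | E⁻₁ ∪ E⁺) = ∫_{(-∞, x]} f̂ dμ. -/

import Mathlib

open MeasureTheory ProbabilityTheory Set

/-!
Given `X = x`, the uniform variable `V` satisfies `V * M ≤ f x / h x` with probability
`f x / (M * h x)`, which the bound `f ≤ M * h` keeps below `1`. Multiplying by the density `h` of
`X`, the law of `X` restricted to acceptance has density `f / M`, so conditioning leaves `f`.
The auxiliary density `g` only splits this acceptance event into pieces.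
-/

section Measures

variable {α β Ω : Type*} [MeasurableSpace α] [MeasurableSpace β] [MeasurableSpace Ω]

theorem fst_restrict_prod_eq_withDensity (ν : Measure α) (ρ : Measure β) [SFinite ρ]
    {B : Set (α × β)} (hB : MeasurableSet B) :
    ((ν.prod ρ).restrict B).fst = ν.withDensity fun x => ρ (Prod.mk x ⁻¹' B) := by
  ext S hS
  rw [Measure.fst_apply hS, Measure.restrict_apply (measurable_fst hS),
    Measure.prod_apply ((measurable_fst hS).inter hB), withDensity_apply _ hS,
    ← lintegral_indicator hS]
  refine lintegral_congr fun x => ?_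
  by_cases hx : x ∈ S <;> simp [hx, preimage_preimage]

theorem map_restrict_preimage_of_indepFun {P : Measure Ω} [IsFiniteMeasure P] {X : Ω → α}
    {V : Ω → β} (hX : Measurable X) (hV : Measurable V) (hXV : IndepFun X V P)
    {B : Set (α × β)} (hB : MeasurableSet B) :
    (P.restrict ((fun ω => (X ω, V ω)) ⁻¹' B)).map X =
      (P.map X).withDensity fun x => P.map V (Prod.mk x ⁻¹' B) := by
  rw [← Measure.fst_map_prodMk hV, ← Measure.restrict_map (hX.prodMk hV) hB,
    (indepFun_iff_map_prod_eq_prod_map_map hX.aemeasurable hV.aemeasurable).1 hXV,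
    fst_restrict_prod_eq_withDensity _ _ hB]

theorem map_cond_eq_of_map_restrict_eq_smul {P : Measure Ω} {X : Ω → α} (hX : Measurable X)
    {A : Set Ω} {ν : Measure α} [IsProbabilityMeasure ν] {c : ENNReal} (hc₀ : c ≠ 0)
    (hc : c ≠ ⊤) (h : (P.restrict A).map X = c • ν) :
    (P[|A]).map X = ν := by
  have hPA : P A = c := by
    simpa [Measure.map_apply hX MeasurableSet.univ] using congrArg (· univ) h
  rw [ProbabilityTheory.cond, Measure.map_smul, h, hPA, smul_smul,
    ENNReal.inv_mul_cancel hc₀ hc, one_smul]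

theorem volume_restrict_Icc_zero_one_Iic (r : ℝ) :
    volume.restrict (Icc (0 : ℝ) 1) (Iic r) = ENNReal.ofReal (min r 1) := by
  have h_inter : Iic r ∩ Icc 0 1 = Icc 0 (min r 1) := by
    ext v
    simp only [mem_inter_iff, mem_Iic, mem_Icc, le_min_iff]
    tauto
  rw [Measure.restrict_apply measurableSet_Iic, h_inter, Real.volume_Icc, sub_zero]

theorem isProbabilityMeasure_withDensity_ofReal {μ : Measure α} {f : α → ℝ}
    (f_nonneg : 0 ≤ᵐ[μ] f) (f_int : ∫ x, f x ∂μ = 1) :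
    IsProbabilityMeasure (μ.withDensity fun x => ENNReal.ofReal (f x)) :=
  ⟨by
    rw [withDensity_apply _ MeasurableSet.univ, Measure.restrict_univ,
      ← ofReal_integral_eq_lintegral_ofReal (integrable_of_integral_eq_one f_int) f_nonneg,
      f_int, ENNReal.ofReal_one]⟩

end Measures

section RejectionSampling

variable {α Ω : Type*} {f g h : α → ℝ} {M : ℝ} {X : Ω → α} {V : Ω → ℝ}

/-- The event that rejection sampling accepts the proposal `X`, drawn from the density `h`, as an
observation from the density `f`; `V` is the uniform variable and `M` the bound on `f / h`.
Where `h` vanishes the ratio is `0` by convention, but `X` almost surely avoids such points. -/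
def acceptEvent (f h : α → ℝ) (M : ℝ) (X : Ω → α) (V : Ω → ℝ) : Set Ω :=
  {ω | V ω * M ≤ f (X ω) / h (X ω)}

theorem union_split_eq_acceptEvent (h_nonneg : ∀ x, 0 ≤ h x) :
    {ω | f (X ω) < g (X ω) ∧ V ω * M ≤ f (X ω) / h (X ω)}
        ∪ ({ω | g (X ω) ≤ f (X ω) ∧ V ω * M ≤ g (X ω) / h (X ω)}
          ∪ {ω | g (X ω) ≤ f (X ω) ∧ g (X ω) / h (X ω) < V ω * M
              ∧ V ω * M ≤ f (X ω) / h (X ω)}) =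
      acceptEvent f h M X V := by
  ext ω
  have h_div : g (X ω) ≤ f (X ω) → g (X ω) / h (X ω) ≤ f (X ω) / h (X ω) :=
    fun hgf => div_le_div_of_nonneg_right hgf (h_nonneg _)
  simp only [acceptEvent, mem_union, mem_ofPred_eq]
  grind

theorem ofReal_mul_ofReal_min_div_div {a b : ℝ} (hM : 0 < M) (hab : a ≤ M * b) :
    ENNReal.ofReal b * ENNReal.ofReal (min (a / b / M) 1) =
      ENNReal.ofReal M⁻¹ * ENNReal.ofReal a := by
  rcases le_or_gt b 0 with hb | hb
  · have ha : a ≤ 0 := hab.trans (mul_nonpos_of_nonneg_of_nonpos hM.le hb)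
    rw [ENNReal.ofReal_of_nonpos hb, ENNReal.ofReal_of_nonpos ha, zero_mul, mul_zero]
  · have h_ratio : a / b / M ≤ 1 := by rwa [div_le_one hM, div_le_iff₀ hb]
    rw [min_eq_left h_ratio, ← ENNReal.ofReal_mul hb.le,
      ← ENNReal.ofReal_mul (inv_nonneg.2 hM.le)]
    congr 1
    field_simp

variable [MeasurableSpace α] [MeasurableSpace Ω] {μ : Measure α} {P : Measure Ω}
  [IsFiniteMeasure P]

theorem map_restrict_acceptEvent (hh : Measurable h) (hf : Measurable f) (hM : 0 < M)
    (hfM : ∀ᵐ x ∂μ, f x ≤ M * h x) (hX : Measurable X) (hV : Measurable V)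
    (hXlaw : P.map X = μ.withDensity fun x => ENNReal.ofReal (h x))
    (hVlaw : P.map V = volume.restrict (Icc (0 : ℝ) 1)) (hXV : IndepFun X V P) :
    (P.restrict (acceptEvent f h M X V)).map X =
      ENNReal.ofReal M⁻¹ • μ.withDensity fun x => ENNReal.ofReal (f x) := by
  let r : α → ℝ := fun x => f x / h x / M
  have hr : Measurable r := (hf.div hh).div_const M
  have hB : MeasurableSet {p : α × ℝ | p.2 ≤ r p.1} :=
    measurableSet_le measurable_snd (hr.comp measurable_fst)
  have h_event : acceptEvent f h M X V = (fun ω => (X ω, V ω)) ⁻¹' {p | p.2 ≤ r p.1} := by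
    ext ω
    exact (le_div_iff₀ hM).symm
  have h_slice (x : α) :
      P.map V (Prod.mk x ⁻¹' {p | p.2 ≤ r p.1}) = ENNReal.ofReal (min (r x) 1) := by
    rw [hVlaw]
    exact volume_restrict_Icc_zero_one_Iic (r x)
  rw [h_event, map_restrict_preimage_of_indepFun hX hV hXV hB]
  simp_rw [h_slice]
  rw [hXlaw, ← withDensity_mul _ hh.ennreal_ofReal (hr.min measurable_const).ennreal_ofReal,
    ← withDensity_smul _ hf.ennreal_ofReal]
  exact withDensity_congr_ae (hfM.mono fun x hx => ofReal_mul_ofReal_min_div_div hM hx)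

theorem map_cond_acceptEvent (hh : Measurable h) (hf : Measurable f)
    (f_nonneg : 0 ≤ᵐ[μ] f) (f_int : ∫ x, f x ∂μ = 1) (hM : 0 < M)
    (hfM : ∀ᵐ x ∂μ, f x ≤ M * h x) (hX : Measurable X) (hV : Measurable V)
    (hXlaw : P.map X = μ.withDensity fun x => ENNReal.ofReal (h x))
    (hVlaw : P.map V = volume.restrict (Icc (0 : ℝ) 1)) (hXV : IndepFun X V P) :
    (P[|acceptEvent f h M X V]).map X = μ.withDensity fun x => ENNReal.ofReal (f x) :=
  have := isProbabilityMeasure_withDensity_ofReal f_nonneg f_int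
  map_cond_eq_of_map_restrict_eq_smul hX (ENNReal.ofReal_pos.2 (inv_pos.2 hM)).ne'
    ENNReal.ofReal_ne_top (map_restrict_acceptEvent hh hf hM hfM hX hV hXlaw hVlaw hXV)

theorem stmt5_general (hh : Measurable h) (hf : Measurable f)
    (h_nonneg : ∀ x, 0 ≤ h x) (f_nonneg : ∀ x, 0 ≤ f x) (f_int : ∫ x, f x ∂μ = 1) (hM : 0 < M)
    (hfM : ∀ᵐ x ∂μ, f x ≤ M * h x) (hX : Measurable X) (hV : Measurable V)
    (hXlaw : P.map X = μ.withDensity fun x => ENNReal.ofReal (h x))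
    (hVlaw : P.map V = volume.restrict (Icc (0 : ℝ) 1)) (hXV : IndepFun X V P)
    {S : Set α} (hS : MeasurableSet S) :
    ((P[|{ω | f (X ω) < g (X ω) ∧ V ω * M ≤ f (X ω) / h (X ω)}
        ∪ ({ω | g (X ω) ≤ f (X ω) ∧ V ω * M ≤ g (X ω) / h (X ω)}
          ∪ {ω | g (X ω) ≤ f (X ω) ∧ g (X ω) / h (X ω) < V ω * M
              ∧ V ω * M ≤ f (X ω) / h (X ω)})]) (X ⁻¹' S)).toReal =
      ∫ x in S, f x ∂μ := by
  have f_nonneg_ae (ν : Measure α) : 0 ≤ᵐ[ν] f := .of_forall f_nonneg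
  rw [union_split_eq_acceptEvent h_nonneg, ← Measure.map_apply hX hS,
    map_cond_acceptEvent hh hf (f_nonneg_ae μ) f_int hM hfM hX hV hXlaw hVlaw hXV,
    withDensity_apply _ hS,
    integral_eq_lintegral_of_nonneg_ae (f_nonneg_ae _) hf.aestronglyMeasurable]

end RejectionSampling

theorem stmt5
    (μ : Measure ℝ) [SigmaFinite μ]
    (h g fhat : ℝ → ℝ)
    (hmeas_h : Measurable h) (hmeas_g : Measurable g) (hmeas_f : Measurable fhat)
    (h_nonneg : ∀ x, 0 ≤ h x) (g_nonneg : ∀ x, 0 ≤ g x) (f_nonneg : ∀ x, 0 ≤ fhat x)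
    (h_int : ∫ x, h x ∂μ = 1) (g_int : ∫ x, g x ∂μ = 1) (f_int : ∫ x, fhat x ∂μ = 1)
    (h_pos : ∀ x, 0 < g x + fhat x → 0 < h x)
    (Mstar : ℝ) (hM : 0 < Mstar)
    (hMf : ∀ᵐ x ∂μ, fhat x ≤ Mstar * h x)
    (hMg : ∀ᵐ x ∂μ, g x ≤ Mstar * h x)
    (Ω : Type*) [MeasurableSpace Ω] (P : Measure Ω) [IsProbabilityMeasure P]
    (X V : Ω → ℝ) (hX : Measurable X) (hV : Measurable V)
    (hXlaw : Measure.map X P = μ.withDensity (fun x => ENNReal.ofReal (h x)))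
    (hVlaw : Measure.map V P = volume.restrict (Set.Icc (0:ℝ) 1))
    (hXV : IndepFun X V P) :
    ∀ x : ℝ,
      ((P[|{ω | fhat (X ω) < g (X ω) ∧ V ω * Mstar ≤ fhat (X ω) / h (X ω)}
          ∪ ({ω | g (X ω) ≤ fhat (X ω) ∧ V ω * Mstar ≤ g (X ω) / h (X ω)}
            ∪ {ω | g (X ω) ≤ fhat (X ω) ∧ g (X ω) / h (X ω) < V ω * Mstar
                ∧ V ω * Mstar ≤ fhat (X ω) / h (X ω)})]) {ω | X ω ≤ x}).toReal
        = ∫ t in Set.Iic x, fhat t ∂μ :=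
  fun _ => stmt5_general hmeas_h hmeas_f h_nonneg f_nonneg f_int hM hMf hX hV hXlaw hVlaw hXV
    measurableSet_Iic
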